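/- arXiv:1702.00245 — 2 statements merged into one kernel-verified Lean document; each statement's English description precedes it below -/
import Mathlib

section
/- Every finite non-abelian group G has at least two distinct minimal centralizers; that is, there exist non-central elements x, y ∈ G such that C_G(x) and C_G(y) are minimal centralizers and C_G(x) ≠ C_G(y). -/
open Subgroup

/-- The centraliser of `x` is a minimal centraliser: any non-central element
centraliser contained in it is equal to it. -/
def IsMinCentralizer {G : Type*} [Group G] (x : G) : Prop :=
  ∀ y : G, y ∉ center G →
    centralizer ({y} : Set G) ≤ centralizer ({x} : Set G) →
    centralizer ({y} : Set G) = centralizer ({x} : Set G)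

/-!
Under the minimal condition on centralizers of elements, the centralizer of every non-central
element contains a minimal centralizer. Take a minimal centralizer `C(x)`, an element `g` that does
not commute with `x`, and a minimal centralizer `C(y) ≤ C(g)`. If `C(x) = C(y)`, then
`x ∈ C(x) = C(y) ≤ C(g)`, so `x` would commute with `g`.
-/

section MinimalCondition

variable {G : Type*} [Group G]

theorem exists_isMinCentralizer_centralizer_le
    (hwf : (Set.range fun x : G ↦ centralizer ({x} : Set G)).IsWF) {g : G} (hg : g ∉ center G) :
    ∃ y : G, y ∉ center G ∧ IsMinCentralizer y ∧
      centralizer ({y} : Set G) ≤ centralizer ({g} : Set G) := by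
  induction g using (Set.wellFoundedOn_range.1 hwf).induction with
  | _ g ih =>
    by_cases hmin : IsMinCentralizer g
    · exact ⟨g, hg, hmin, le_rfl⟩
    · obtain ⟨z, hz, hzg, hne⟩ : ∃ z : G, z ∉ center G ∧
          centralizer ({z} : Set G) ≤ centralizer ({g} : Set G) ∧
          centralizer ({z} : Set G) ≠ centralizer ({g} : Set G) := by
        simpa only [IsMinCentralizer, not_forall, exists_prop] using hmin
      obtain ⟨y, hy, hymin, hyz⟩ := ih z (lt_of_le_of_ne hzg hne) hz
      exact ⟨y, hy, hymin, hyz.trans hzg⟩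

theorem exists_isMinCentralizer_centralizer_ne
    (hwf : (Set.range fun x : G ↦ centralizer ({x} : Set G)).IsWF) {x : G} (hx : x ∉ center G) :
    ∃ y : G, y ∉ center G ∧ IsMinCentralizer y ∧
      centralizer ({x} : Set G) ≠ centralizer ({y} : Set G) := by
  obtain ⟨g, hgx⟩ : ∃ g : G, g * x ≠ x * g := by
    simpa only [mem_center_iff, not_forall] using hx
  have hg : g ∉ center G := fun h ↦ hgx (mem_center_iff.1 h x).symm
  obtain ⟨y, hy, hymin, hyg⟩ := exists_isMinCentralizer_centralizer_le hwf hg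
  refine ⟨y, hy, hymin, fun hxy ↦ hgx ?_⟩
  have hx_mem : x ∈ centralizer ({g} : Set G) :=
    hyg (hxy ▸ mem_centralizer_singleton_iff.2 rfl)
  exact (mem_centralizer_singleton_iff.1 hx_mem).symm

theorem exists_two_minimal_centralizers_general
    (hwf : (Set.range fun x : G ↦ centralizer ({x} : Set G)).IsWF)
    (hG : ¬ ∀ a b : G, a * b = b * a) :
    ∃ x y : G, x ∉ center G ∧ y ∉ center G ∧ IsMinCentralizer x ∧ IsMinCentralizer y ∧
      centralizer ({x} : Set G) ≠ centralizer ({y} : Set G) := by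
  obtain ⟨a, ha⟩ : ∃ a : G, a ∉ center G := by
    by_contra! hcentral
    exact hG fun a b ↦ mem_center_iff.1 (hcentral b) a
  obtain ⟨x, hx, hxmin, -⟩ := exists_isMinCentralizer_centralizer_le hwf ha
  obtain ⟨y, hy, hymin, hxy⟩ := exists_isMinCentralizer_centralizer_ne hwf hx
  exact ⟨x, y, hx, hy, hxmin, hymin, hxy⟩

end MinimalCondition

theorem exists_two_minimal_centralizers (G : Type*) [Group G] [Finite G]
    (hG : ¬ ∀ a b : G, a * b = b * a) :
    ∃ x y : G, x ∉ center G ∧ y ∉ center G ∧ IsMinCentralizer x ∧ IsMinCentralizer y ∧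
      centralizer ({x} : Set G) ≠ centralizer ({y} : Set G) :=
  exists_two_minimal_centralizers_general (Set.finite_range _).isWF hG
end

section
/- Let G be a finite group, p a prime and n ≥ 1 with p^n > 3, and suppose the quotient G/Z(G) is isomorphic to PSL₂(𝔽_{p^n}) or to PGL₂(𝔽_{p^n}), where 𝔽_{p^n} is the finite field with p^n elements. Then G is a CA_min-group. -/
open Subgroup

/-- `G` is a `CA_min`-group: any two distinct minimal non-central element
centralisers intersect in the centre. -/
def IsCAminGroup (G : Type*) [Group G] : Prop :=
  ∀ x y : G, x ∉ center G → y ∉ center G → IsMinCentralizer x → IsMinCentralizer y →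
    centralizer ({x} : Set G) ≠ centralizer ({y} : Set G) →
    centralizer ({x} : Set G) ⊓ centralizer ({y} : Set G) = center G

/-- The projective special linear group of degree 2 over `F`. -/
abbrev PSL2 (F : Type*) [Field F] :=
  Matrix.SpecialLinearGroup (Fin 2) F ⧸ center (Matrix.SpecialLinearGroup (Fin 2) F)

/-- The projective general linear group of degree 2 over `F`. -/
abbrev PGL2 (F : Type*) [Field F] :=
  Matrix.GeneralLinearGroup (Fin 2) F ⧸ center (Matrix.GeneralLinearGroup (Fin 2) F)

/-!
Compose `G → G ⧸ center G` with the embedding of the quotient into `PGL(2, F)` to get a map `f`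
with kernel `center G`. Lifts to `GL(2, F)` of commuting elements of `G` commute or anticommute,
and the latter happens only when both have trace zero and `2 ≠ 0` in `F`. Let `A` lift the image of
`x`, where `x` has minimal centralizer.

* If `A` has two distinct eigenvalues, the preimage in `G` of its torus is abelian, being a central
  extension of a cyclic group. If the torus has an element of the image of `f` with nonzero trace,
  the centralizer of that element lies in the preimage of the torus, so minimality makes the
  centralizer of `x` equal to it; and two such preimages sharing a non-central element coincide.
* If `A` is parabolic, commutators on the preimage of its unipotent subgroup, identified with `F`,
  define an alternating biadditive form invariant under `(x, y) ↦ (s ^ 2 * x, s ^ 2 * y)`.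
  Orthogonality for such a form is transitive, so every non-central element commuting with `x` has
  the same centralizer as `x`.
* The remaining case is that of trace zero elements of `PSL(2, 5)`, where the torus meets
  `PSL(2, 5)` in a group of order two. Again every non-central element commuting with `x` has the
  same centralizer as `x`.
-/

section InvariantForms

variable {A M : Type*} [AddCommGroup A] [AddCommGroup M] {p : ℕ}

lemma addSubgroup_eq_top_of_bot_lt_of_lt (hp : p.Prime) (hA : Nat.card A ∣ p ^ 2)
    {H K : AddSubgroup A} (hH : ⊥ < H) (hK : H < K) : K = ⊤ := by
  have : Finite A :=
    Nat.finite_of_card_ne_zero (ne_zero_of_dvd_ne_zero (pow_ne_zero 2 hp.ne_zero) hA)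
  have card_lt {H K : AddSubgroup A} (h : H < K) : Nat.card H < Nat.card K :=
    lt_of_not_ge fun hle ↦ h.ne (AddSubgroup.eq_of_le_of_card_ge h.le hle)
  by_contra hne
  have h₁ := card_lt hH
  have h₂ := card_lt hK
  have h₃ := card_lt (lt_top_iff_ne_top.2 hne)
  have card_dvd (L : AddSubgroup A) : ∃ k ≤ 2, Nat.card L = p ^ k :=
    (Nat.dvd_prime_pow hp).1 (L.card_addSubgroup_dvd_card.trans hA)
  obtain ⟨a, -, ha⟩ := card_dvd ⊥
  obtain ⟨b, -, hb⟩ := card_dvd H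
  obtain ⟨c, -, hc⟩ := card_dvd K
  obtain ⟨d, hd, hd'⟩ := card_dvd ⊤
  rw [ha, hb, Nat.pow_lt_pow_iff_right hp.one_lt] at h₁
  rw [hb, hc, Nat.pow_lt_pow_iff_right hp.one_lt] at h₂
  rw [hc, hd', Nat.pow_lt_pow_iff_right hp.one_lt] at h₃
  omega

lemma apply_eq_zero_trans_of_card_dvd_prime_sq (hp : p.Prime) (hA : Nat.card A ∣ p ^ 2)
    (B : A →+ A →+ M) (halt : ∀ x, B x x = 0) {x z w : A} (hz : z ≠ 0) (hxz : B x z = 0)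
    (hzw : B z w = 0) : B x w = 0 := by
  by_cases hx : x ∈ AddSubgroup.zmultiples z
  · obtain ⟨k, rfl⟩ := AddSubgroup.mem_zmultiples_iff.1 hx
    rw [map_zsmul, AddMonoidHom.zsmul_apply, hzw, smul_zero]
  · have hlt : AddSubgroup.zmultiples z < (B x).ker :=
      SetLike.lt_iff_le_and_exists.2 ⟨AddSubgroup.zmultiples_le.2 hxz, x, halt x, hx⟩
    have htop := addSubgroup_eq_top_of_bot_lt_of_lt hp hA
      (bot_lt_iff_ne_bot.2 (AddSubgroup.zmultiples_ne_bot.2 hz)) hlt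
    exact AddMonoidHom.mem_ker.1 (htop ▸ AddSubgroup.mem_top w)

variable {F : Type*} [Field F]

-- The adjoint of multiplication by `s ^ 2` is multiplication by `s⁻¹ ^ 2`, which is additive in
-- `s ^ 2` only if the form vanishes: compare the adjoints of the two sides of
-- `(t ^ 2 + 1) ^ 2 = (t ^ 2) ^ 2 + 2 * t ^ 2 + 1`.
lemma form_eq_zero_of_sq_invariant {B : F →+ F →+ M}
    (hB : ∀ s, s ≠ 0 → ∀ x y, B (s ^ 2 * x) (s ^ 2 * y) = B x y) {t : F}
    (ht : t ^ 2 * (t ^ 2 + 1) * ((t ^ 2) ^ 2 + t ^ 2 + 1) * ((t ^ 2) ^ 2 + 3 * t ^ 2 + 1) ≠ 0) :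
    B = 0 := by
  simp only [mul_ne_zero_iff] at ht
  obtain ⟨⟨⟨ht₀, ht₁⟩, ht₂⟩, ht₃⟩ := ht
  have adjoint {s : F} (hs : s ≠ 0) (x y : F) : B x (s⁻¹ ^ 2 * y) = B (s ^ 2 * x) y := by
    rw [← hB s hs, ← mul_assoc, ← mul_pow, mul_inv_cancel₀ hs, one_pow, one_mul]
  set c : F := (t ^ 2 + 1)⁻¹ ^ 2 - (t ^ 2)⁻¹ ^ 2 - t⁻¹ ^ 2 - t⁻¹ ^ 2 - 1 with hc
  have hc₀ : c ≠ 0 := by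
    have : c * ((t ^ 2) ^ 2 * (t ^ 2 + 1) ^ 2) =
        -(((t ^ 2) ^ 2 + t ^ 2 + 1) * ((t ^ 2) ^ 2 + 3 * t ^ 2 + 1)) := by
      have : t ≠ 0 := by rintro rfl; simp at ht₀
      rw [hc]
      field_simp
      ring
    exact left_ne_zero_of_mul (this ▸ neg_ne_zero.2 (mul_ne_zero ht₂ ht₃))
  have kills (x y : F) : B x (c * y) = 0 := by
    have ht : t ≠ 0 := by rintro rfl; simp at ht₀
    have expand : (t ^ 2 + 1) ^ 2 * x = (t ^ 2) ^ 2 * x + t ^ 2 * x + t ^ 2 * x + x := by ring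
    rw [hc]
    simp only [sub_mul, one_mul, map_sub, adjoint ht₁, adjoint ht₀, adjoint ht, expand, map_add,
      AddMonoidHom.add_apply]
    abel
  ext x y
  rw [← mul_inv_cancel_left₀ hc₀ y, kills]
  rfl

variable [Finite F]

lemma exists_eval_ne_zero_of_natDegree_lt {P : Polynomial F} (hP : P ≠ 0)
    (h : P.natDegree < Nat.card F) : ∃ a, P.eval a ≠ 0 :=
  P.exists_eval_ne_zero_of_natDegree_lt_card hP (by rw [← Nat.cast_card]; exact_mod_cast h)

lemma exists_eval_sq_ne_zero {P : Polynomial F} (hP : P ≠ 0) (hdeg : P.natDegree ≤ 6)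
    {k : ℕ} (hp : p.Prime) (hF : Nat.card F = p ^ k) (hk : 3 ≤ k) : ∃ t, P.eval (t ^ 2) ≠ 0 := by
  by_cases h2 : ringChar F = 2
  · have : 2 ^ 3 ≤ Nat.card F :=
      hF ▸ (Nat.pow_le_pow_left hp.two_le 3).trans (Nat.pow_le_pow_right hp.pos hk)
    obtain ⟨a, ha⟩ := exists_eval_ne_zero_of_natDegree_lt hP (by lia)
    obtain ⟨t, rfl⟩ := FiniteField.isSquare_of_char_two h2 a
    exact ⟨t, by rwa [sq]⟩
  · have : Fintype F := Fintype.ofFinite F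
    have hodd : Nat.card F % 2 = 1 := by
      rw [Nat.card_eq_fintype_card, FiniteField.odd_card_of_char_ne_two h2]
    have hp3 : 3 ≤ p := by
      refine hp.two_le.lt_of_ne' ?_
      rintro rfl
      rw [hF, Nat.pow_mod, Nat.mod_self, zero_pow (by lia)] at hodd
      contradiction
    have : 3 ^ 3 ≤ Nat.card F :=
      hF ▸ (Nat.pow_le_pow_left hp3 3).trans (Nat.pow_le_pow_right hp.pos hk)
    obtain ⟨t, ht⟩ := exists_eval_ne_zero_of_natDegree_lt
      ((Polynomial.expand_ne_zero two_pos).2 hP) (by rw [Polynomial.natDegree_expand]; lia)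
    exact ⟨t, by rwa [Polynomial.expand_eval] at ht⟩

theorem apply_eq_zero_trans_of_sq_invariant {B : F →+ F →+ M} (halt : ∀ x, B x x = 0)
    (hB : ∀ s, s ≠ 0 → ∀ x y, B (s ^ 2 * x) (s ^ 2 * y) = B x y)
    {x z w : F} (hz : z ≠ 0) (hxz : B x z = 0) (hzw : B z w = 0) : B x w = 0 := by
  have := Fintype.ofFinite F
  obtain ⟨p, -, k, hp, hF⟩ := FiniteField.card' F
  rw [← Nat.card_eq_fintype_card] at hF
  obtain hk | hk := lt_or_ge (k : ℕ) 3
  · exact apply_eq_zero_trans_of_card_dvd_prime_sq hp (hF ▸ pow_dvd_pow p (by lia)) B halt hz hxz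
      hzw
  · open Polynomial in
    obtain ⟨t, ht⟩ := exists_eval_sq_ne_zero
      (P := (X * (X + 1) * (X ^ 2 + X + 1) * (X ^ 2 + 3 * X + 1) : F[X]))
      (Monic.ne_zero (by monicity!)) (by compute_degree) hp hF hk
    rw [form_eq_zero_of_sq_invariant hB (t := t) (by simpa using ht)]
    rfl

end InvariantForms

section CommutatorPairing

open scoped commutatorElement IsMulCommutative

variable {G Q : Type*} [Group G] [Group Q] {f : G →* Q}

lemma commutatorElement_mul_of_mem_center {z : G} (hz : z ∈ center G) (g h : G) :
    ⁅g * z, h⁆ = ⁅g, h⁆ := by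
  have : ⁅z, h⁆ = 1 := commutatorElement_eq_one_iff_mul_comm.2 (mem_center_iff.1 hz h).symm
  rw [commutatorElement_mul_left_eq_conj_mul, this, mul_one, mul_inv_cancel, one_mul]

lemma commutatorElement_eq_of_map_eq (hf : f.ker ≤ center G) {g g' h h' : G} (hg : f g = f g')
    (hh : f h = f h') : ⁅g, h⁆ = ⁅g', h'⁆ := by
  have left {g g' : G} (h : G) (hg : f g = f g') : ⁅g, h⁆ = ⁅g', h⁆ := by
    have hz : g'⁻¹ * g ∈ center G := hf (by simp [MonoidHom.mem_ker, hg])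
    rw [← commutatorElement_mul_of_mem_center hz g' h, mul_inv_cancel_left]
  rw [left h hg, ← commutatorElement_inv, left g' hh, commutatorElement_inv]

lemma commute_iff_of_map_eq (hf : f.ker ≤ center G) {g g' h h' : G} (hg : f g = f g')
    (hh : f h = f h') : Commute g h ↔ Commute g' h' := by
  rw [← commutatorElement_eq_one_iff_commute, commutatorElement_eq_of_map_eq hf hg hh,
    commutatorElement_eq_one_iff_commute]

lemma commutatorElement_mul_left_of_mem_center {a b c : G} (h : ⁅b, c⁆ ∈ center G) :
    ⁅a * b, c⁆ = ⁅a, c⁆ * ⁅b, c⁆ := by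
  rw [commutatorElement_mul_left_eq_conj_mul, mem_center_iff.1 h, mul_inv_cancel_right,
    ← mem_center_iff.1 h]

lemma commutatorElement_mul_right_of_mem_center {a b c : G} (h : ⁅a, c⁆ ∈ center G) :
    ⁅a, b * c⁆ = ⁅a, b⁆ * ⁅a, c⁆ := by
  rw [commutatorElement_mul_right_eq_mul_conj, mul_assoc _ b, mem_center_iff.1 h, ← mul_assoc,
    mul_inv_cancel_right]

theorem exists_commutator_pairing {A : Type*} [AddCommMonoid A] (hf : f.ker ≤ center G)
    {φ : AddChar A Q} (hφ : ∀ a, φ a ∈ f.range) :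
    ∃ B : A →+ A →+ Additive (center G),
      ∀ {g h a b}, f g = φ a → f h = φ b → ((B a b).toMul : G) = ⁅g, h⁆ := by
  choose u hu using hφ
  have mem_center (a b : A) : ⁅u a, u b⁆ ∈ center G := hf <| by
    rw [MonoidHom.mem_ker, map_commutatorElement, commutatorElement_eq_one_iff_commute, hu, hu,
      commute_iff_eq, ← φ.map_add_eq_mul, add_comm, φ.map_add_eq_mul]
  have map_add (a b : A) : f (u (a + b)) = f (u a * u b) := by
    rw [map_mul, hu, hu, hu, φ.map_add_eq_mul]
  let B : A →+ A →+ Additive (center G) := AddMonoidHom.mk'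
    (fun a ↦ AddMonoidHom.mk' (fun b ↦ Additive.ofMul ⟨⁅u a, u b⁆, mem_center a b⟩) fun b c ↦
      congrArg Additive.ofMul <| Subtype.ext <|
        (commutatorElement_eq_of_map_eq hf rfl (map_add b c)).trans
          (commutatorElement_mul_right_of_mem_center (mem_center a c)))
    fun a b ↦ AddMonoidHom.ext fun c ↦ congrArg Additive.ofMul <| Subtype.ext <|
        (commutatorElement_eq_of_map_eq hf (map_add a b) rfl).trans
          (commutatorElement_mul_left_of_mem_center (mem_center b c))
  refine ⟨B, fun {g h a b} hg hh ↦ ?_⟩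
  exact commutatorElement_eq_of_map_eq hf ((hu a).trans hg.symm) ((hu b).trans hh.symm)

theorem commute_trans_of_sq_equivariant {F : Type*} [Field F] [Finite F] (hf : f.ker ≤ center G)
    {φ : AddChar F Q} (hφ : ∀ a, φ a ∈ f.range)
    (hconj : ∀ s : F, s ≠ 0 → ∃ t ∈ f.range, ∀ a, φ (s ^ 2 * a) = t * φ a * t⁻¹)
    {x z w : G} (hx : f x ∈ Set.range φ) (hz : f z ∈ Set.range φ) (hw : f w ∈ Set.range φ)
    (hz₁ : z ∉ center G) (hxz : Commute x z) (hzw : Commute z w) : Commute x w := by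
  obtain ⟨a, ha⟩ := hx
  obtain ⟨b, hb⟩ := hz
  obtain ⟨c, hc⟩ := hw
  obtain ⟨B, hB⟩ := exists_commutator_pairing hf hφ
  have eq_zero_iff {g h : G} {a b : F} (hg : φ a = f g) (hh : φ b = f h) :
      B a b = 0 ↔ Commute g h := by
    rw [← commutatorElement_eq_one_iff_commute, ← hB hg.symm hh.symm, OneMemClass.coe_eq_one,
      toMul_eq_one]
  rw [← eq_zero_iff ha hb] at hxz
  rw [← eq_zero_iff hb hc] at hzw
  rw [← eq_zero_iff ha hc]
  have hb₀ : b ≠ 0 := by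
    rintro rfl
    exact hz₁ (hf (by rw [MonoidHom.mem_ker, ← hb, φ.map_zero_eq_one]))
  refine apply_eq_zero_trans_of_sq_invariant (fun a ↦ ?_) (fun s hs a b ↦ ?_) hb₀ hxz hzw
  · obtain ⟨g, hg⟩ := hφ a
    exact (eq_zero_iff hg.symm hg.symm).2 (Commute.refl g)
  · obtain ⟨-, ⟨t, rfl⟩, ht⟩ := hconj s hs
    obtain ⟨g, hg⟩ := hφ a
    obtain ⟨h, hh⟩ := hφ b
    have conj_mem {c : F} {k : G} (hk : f k = φ c) : f (t * k * t⁻¹) = φ (s ^ 2 * c) := by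
      rw [ht, ← hk, map_mul, map_mul, map_inv]
    have central : ⁅g, h⁆ ∈ center G := hB hg hh ▸ (B a b).toMul.2
    refine Additive.toMul.injective (Subtype.ext ?_)
    rw [hB (conj_mem hg) (conj_mem hh), hB hg hh, ← conjugate_commutatorElement,
      mem_center_iff.1 central, mul_inv_cancel_right]

end CommutatorPairing

section TwoByTwo

open Matrix

variable {F : Type*} [Field F] {M N : Matrix (Fin 2) (Fin 2) F}

lemma exists_eq_smul_one_add_smul_of_commute (hM : M ∉ Set.range (scalar (Fin 2)))
    (h : Commute M N) : ∃ a b : F, N = a • 1 + b • M := by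
  have h₀₀ := congr_fun₂ h 0 0
  have h₀₁ := congr_fun₂ h 0 1
  have h₁₀ := congr_fun₂ h 1 0
  simp only [mul_apply, Fin.sum_univ_two] at h₀₀ h₀₁ h₁₀
  have hne : M 0 1 ≠ 0 ∨ M 1 0 ≠ 0 ∨ M 0 0 - M 1 1 ≠ 0 := by
    by_contra! hM'
    refine hM ⟨M 0 0, ?_⟩
    ext i j
    fin_cases i <;> fin_cases j <;> simp [hM'.1, hM'.2.1, sub_eq_zero.1 hM'.2.2]
  obtain ⟨b, hb₀₁, hb₁₀, hb⟩ : ∃ b, N 0 1 = b * M 0 1 ∧ N 1 0 = b * M 1 0 ∧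
      N 0 0 - N 1 1 = b * (M 0 0 - M 1 1) := by
    rcases hne with hne | hne | hne
    · exact ⟨N 0 1 / M 0 1, by grind⟩
    · exact ⟨N 1 0 / M 1 0, by grind⟩
    · exact ⟨(N 0 0 - N 1 1) / (M 0 0 - M 1 1), by grind⟩
  refine ⟨N 0 0 - b * M 0 0, b, ?_⟩
  ext i j
  fin_cases i <;> fin_cases j <;> simp [hb₀₁, hb₁₀]
  linear_combination -hb

lemma commute_trans_of_notMem_range_scalar {L : Matrix (Fin 2) (Fin 2) F}
    (hM : M ∉ Set.range (scalar (Fin 2))) (hL : Commute M L) (hN : Commute M N) : Commute L N := by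
  obtain ⟨a, b, rfl⟩ := exists_eq_smul_one_add_smul_of_commute hM hL
  exact ((Commute.one_left _).smul_left a).add_left (hN.smul_left b)

lemma sq_fin_two (M : Matrix (Fin 2) (Fin 2) F) : M ^ 2 = M.trace • M - M.det • 1 := by
  ext i j
  fin_cases i <;> fin_cases j <;>
    simp [sq, mul_apply, trace_fin_two, det_fin_two] <;> ring

lemma trace_smul_one_add_smul (a b : F) :
    (a • (1 : Matrix (Fin 2) (Fin 2) F) + b • M).trace = 2 * a + b * M.trace := by
  simp only [trace_add, trace_smul, trace_one, Fintype.card_fin, smul_eq_mul]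
  push_cast
  ring

lemma det_smul_one_add_smul (a b : F) :
    (a • (1 : Matrix (Fin 2) (Fin 2) F) + b • M).det = a ^ 2 + a * b * M.trace + b ^ 2 * M.det := by
  simp only [det_fin_two, trace_fin_two, Matrix.add_apply, Matrix.smul_apply, smul_eq_mul,
    one_apply_eq, one_apply_ne zero_ne_one, one_apply_ne one_ne_zero]
  ring

lemma discr_smul_one_add_smul (a b : F) :
    (a • (1 : Matrix (Fin 2) (Fin 2) F) + b • M).discr = b ^ 2 * M.discr := by
  rw [discr_fin_two, discr_fin_two, trace_smul_one_add_smul, det_smul_one_add_smul]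
  ring

lemma smul_one_add_smul_mem_range_scalar_iff (hM : M ∉ Set.range (scalar (Fin 2))) {a b : F} :
    a • (1 : Matrix (Fin 2) (Fin 2) F) + b • M ∈ Set.range (scalar (Fin 2)) ↔ b = 0 := by
  refine ⟨fun ⟨c, hc⟩ ↦ by_contra fun hb ↦ hM ⟨b⁻¹ * (c - a), ?_⟩, fun hb ↦ ⟨a, ?_⟩⟩
  · rw [map_mul, map_sub, hc, smul_one_eq_diagonal a, scalar_apply, scalar_apply]
    simp [← smul_eq_diagonal_mul, smul_smul, hb]
  · simp [hb, smul_one_eq_diagonal]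

end TwoByTwo

section ProjectiveGroup

open Matrix Matrix.ProjGenLinGroup
open scoped MatrixGroups

variable {F : Type*} [Field F] {A B C : GL (Fin 2) F}

lemma exists_val_eq_of_commute (hA : A ∉ center (GL (Fin 2) F)) (h : Commute A B) :
    ∃ a b : F, B.val = a • 1 + b • A.val :=
  exists_eq_smul_one_add_smul_of_commute
    (mt GeneralLinearGroup.mem_center_iff_val_mem_range_scalar.2 hA) (congrArg Units.val h)

lemma mem_center_iff_of_val_eq (hA : A ∉ center (GL (Fin 2) F)) {a b : F}
    (h : B.val = a • 1 + b • A.val) : B ∈ center (GL (Fin 2) F) ↔ b = 0 := by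
  rw [GeneralLinearGroup.mem_center_iff_val_mem_range_scalar, h,
    smul_one_add_smul_mem_range_scalar_iff
      (mt GeneralLinearGroup.mem_center_iff_val_mem_range_scalar.2 hA)]

lemma commute_of_val_eq {a b : F} (h : B.val = a • 1 + b • A.val) : Commute A B := by
  refine Units.ext ?_
  rw [Units.val_mul, Units.val_mul, h]
  exact ((Commute.one_right _).smul_right a).add_right ((Commute.refl _).smul_right b)

lemma commute_trans_of_notMem_center (hA : A ∉ center (GL (Fin 2) F)) (hB : Commute A B)
    (hC : Commute A C) : Commute B C :=
  Units.ext <| commute_trans_of_notMem_range_scalar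
    (mt GeneralLinearGroup.mem_center_iff_val_mem_range_scalar.2 hA) (congrArg Units.val hB)
    (congrArg Units.val hC)

lemma notMem_center_of_discr_ne_zero (hA : A.val.discr ≠ 0) : A ∉ center (GL (Fin 2) F) := by
  rw [GeneralLinearGroup.mem_center_iff_val_mem_range_scalar]
  rintro ⟨a, ha⟩
  refine hA ?_
  simp only [← ha, discr_fin_two, scalar_apply, trace_diagonal, det_diagonal, Fin.sum_univ_two,
    Fin.prod_univ_two]
  ring

lemma commute_of_mk_eq_mk (h : mk B = mk C) (hAB : Commute A B) : Commute A C := by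
  obtain ⟨u, rfl⟩ := mk_eq_mk_iff.1 h
  exact hAB.mul_right (GeneralLinearGroup.scalar_commute u A).symm

lemma commute_or_mul_eq_neg_mul_of_commute_mk (h : Commute (mk A) (mk B)) :
    Commute A B ∨ A * B = -(B * A) := by
  rw [commute_iff_eq, ← map_mul, ← map_mul] at h
  obtain ⟨u, hu⟩ := mk_eq_mk_iff.1 h.symm
  have hu₂ : u ^ 2 = 1 := by
    simpa [mul_comm A.det] using congrArg GeneralLinearGroup.det hu
  have hu' : A * B = GeneralLinearGroup.scalar (Fin 2) u * (B * A) := by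
    rw [← hu, GeneralLinearGroup.scalar_commute]
  obtain rfl | rfl := Units.eq_or_eq_neg_of_sq_eq_sq u 1 (hu₂.trans (one_pow 2).symm)
  · exact .inl (by rw [commute_iff_eq, hu', map_one, one_mul])
  · refine .inr (hu'.trans ?_)
    ext i j
    simp

lemma trace_eq_zero_of_mul_eq_neg_mul (h2 : (2 : F) ≠ 0) (h : A * B = -(B * A)) :
    A.val.trace = 0 := by
  have hA : A.val = -(B * A * B⁻¹).val := by
    rw [← Units.val_neg, ← neg_mul, ← h, mul_inv_cancel_right]
  have := congrArg trace hA
  rw [trace_neg, Units.val_mul, Units.val_mul, trace_units_conj] at this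
  exact (mul_eq_zero.1 (by linear_combination this)).resolve_left h2

lemma two_ne_zero_of_mul_eq_neg_mul (h : A * B = -(B * A)) (hAB : ¬ Commute A B) :
    (2 : F) ≠ 0 := by
  intro h2
  refine hAB (h.trans ?_)
  ext i j
  rw [Units.val_neg, neg_apply]
  linear_combination -(B * A).val i j * h2

lemma mk_mem_range_toPGL_iff :
    mk A ∈ (ProjectiveSpecialLinearGroup.toPGL : PSL(2, F) →* _).range ↔ IsSquare A.val.det := by
  constructor
  · rintro ⟨g, hg⟩
    induction g using QuotientGroup.induction_on with | H S =>
    rw [ProjectiveSpecialLinearGroup.toPGL_mk, mk_eq_mk_iff] at hg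
    obtain ⟨u, rfl⟩ := hg
    exact ⟨u.val, by simp [sq]⟩
  · rintro ⟨c, hc⟩
    have hc₀ : c ≠ 0 := by
      rintro rfl
      exact A.det.ne_zero (by simpa using hc)
    obtain ⟨S, hS⟩ : ∃ S : SL(2, F), S.val = c⁻¹ • A.val := by
      refine ⟨⟨c⁻¹ • A.val, ?_⟩, rfl⟩
      rw [det_smul, hc, Fintype.card_fin]
      field_simp
    refine ⟨(S : PSL(2, F)), mk_eq_mk_iff.2 ⟨Units.mk0 c hc₀, Units.ext ?_⟩⟩
    rw [Units.val_mul, SpecialLinearGroup.coe_GL_coe_matrix, GeneralLinearGroup.coe_scalar,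
      Units.val_mk0, hS, ← scalar_comm _ (Commute.all c), scalar_apply, ← smul_eq_diagonal_mul,
      smul_inv_smul₀ hc₀]

end ProjectiveGroup

section Parabolic

open Matrix
open scoped MatrixGroups

variable {F : Type*} [Field F]

lemma notMem_center_of_isParabolic {A : GL (Fin 2) F} (hA : A.IsParabolic) :
    A ∉ center (GL (Fin 2) F) :=
  mt GeneralLinearGroup.mem_center_iff_val_mem_range_scalar.1 hA.1

lemma isParabolic_of_commute {A B : GL (Fin 2) F} (hA : A.IsParabolic)
    (hB : B ∉ center (GL (Fin 2) F)) (h : Commute A B) : B.IsParabolic := by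
  obtain ⟨a, b, hab⟩ := exists_val_eq_of_commute (notMem_center_of_isParabolic hA) h
  refine ⟨mt GeneralLinearGroup.mem_center_iff_val_mem_range_scalar.2 hB, ?_⟩
  rw [hab, discr_smul_one_add_smul, hA.2, mul_zero]

lemma trace_ne_zero_or_of_isParabolic {A : GL (Fin 2) F} (hA : A.IsParabolic) :
    A.val.trace ≠ 0 ∨ (2 : F) = 0 := by
  by_contra! h
  have hdiscr := hA.2
  rw [discr_fin_two, h.1] at hdiscr
  have h4 : (2 : F) ^ 2 * A.val.det = 0 := by linear_combination -hdiscr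
  exact mul_ne_zero (pow_ne_zero 2 h.2) A.det.ne_zero h4

lemma exists_mul_eq_mul_of_sq_eq_zero {N : Matrix (Fin 2) (Fin 2) F} (hN : N ^ 2 = 0)
    (hN₀ : N ≠ 0) : ∃ P : GL (Fin 2) F, N * P.val = P.val * !![0, 1; 0, 0] := by
  obtain ⟨v, hv⟩ : ∃ v, N *ᵥ v ≠ 0 := by
    contrapose! hN₀
    exact ext_of_mulVec_single fun i ↦ by rw [hN₀, zero_mulVec]
  obtain ⟨u, hu⟩ : ∃ u, N *ᵥ v = u := ⟨_, rfl⟩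
  have hNu : N *ᵥ u = 0 := by rw [← hu, mulVec_mulVec, ← sq, hN, zero_mulVec]
  rw [hu] at hv
  let P : Matrix (Fin 2) (Fin 2) F := (of ![u, v])ᵀ
  have P_mulVec (w : Fin 2 → F) : P *ᵥ w = w 0 • u + w 1 • v := by
    ext i
    fin_cases i <;> simp [P, mulVec, dotProduct, mul_comm]
  have N_mulVec (a b : F) : N *ᵥ (a • u + b • v) = b • u := by
    rw [mulVec_add, mulVec_smul, mulVec_smul, hNu, hu, smul_zero, zero_add]
  have hdet : P.det ≠ 0 := by
    refine fun h ↦ ?_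
    obtain ⟨w, hw, hPw⟩ := exists_mulVec_eq_zero_iff.2 h
    rw [P_mulVec] at hPw
    have hw₁ : w 1 = 0 := by
      have := N_mulVec (w 0) (w 1)
      rw [hPw, mulVec_zero] at this
      exact (smul_eq_zero.1 this.symm).resolve_right hv
    rw [hw₁, zero_smul, add_zero] at hPw
    exact hw (funext (Fin.forall_fin_two.2 ⟨(smul_eq_zero.1 hPw).resolve_right hv, hw₁⟩))
  refine ⟨GeneralLinearGroup.mkOfDetNeZero P hdet, ext_of_mulVec_single fun i ↦ ?_⟩
  change (N * P) *ᵥ _ = (P * _) *ᵥ _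
  rw [← mulVec_mulVec, ← mulVec_mulVec, P_mulVec, P_mulVec, N_mulVec]
  fin_cases i <;> simp

/-- The one-parameter unipotent subgroup `a ↦ P * !![1, a; 0, 1] * P⁻¹` of `PGL(2, F)`, where `P`
is any invertible matrix. -/
def unipotentChar (P : GL (Fin 2) F) : AddChar F PGL(2, F) :=
  (ProjGenLinGroup.mk.comp (MulAut.conj P).toMonoidHom).compAddChar
    GeneralLinearGroup.upperRightHom

lemma unipotentChar_apply (P : GL (Fin 2) F) (a : F) : unipotentChar P a =
    ProjGenLinGroup.mk (P * GeneralLinearGroup.upperRightHom a * P⁻¹) :=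
  rfl

lemma unipotentChar_mem_range_toPGL (P : GL (Fin 2) F) (a : F) :
    unipotentChar P a ∈ (ProjectiveSpecialLinearGroup.toPGL : PSL(2, F) →* _).range := by
  rw [unipotentChar_apply, mk_mem_range_toPGL_iff, Units.val_mul, Units.val_mul, det_units_conj]
  exact ⟨1, by simp⟩

lemma exists_unipotentChar_sq_mul_eq_conj (P : GL (Fin 2) F) {s : F} (hs : s ≠ 0) :
    ∃ t ∈ (ProjectiveSpecialLinearGroup.toPGL : PSL(2, F) →* _).range,
      ∀ a, unipotentChar P (s ^ 2 * a) = t * unipotentChar P a * t⁻¹ := by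
  let D := GeneralLinearGroup.mkOfDetNeZero !![s, 0; 0, s⁻¹] (by simp [hs])
  refine ⟨ProjGenLinGroup.mk (P * D * P⁻¹), ?_, fun a ↦ ?_⟩
  · rw [mk_mem_range_toPGL_iff, Units.val_mul, Units.val_mul, det_units_conj]
    exact ⟨1, by simp [D, GeneralLinearGroup.mkOfDetNeZero, hs]⟩
  · have hD : GeneralLinearGroup.upperRightHom (s ^ 2 * a) =
        D * GeneralLinearGroup.upperRightHom a * D⁻¹ := by
      refine eq_mul_inv_of_mul_eq (Units.ext ?_)
      ext i j
      fin_cases i <;> fin_cases j <;> simp [D, GeneralLinearGroup.mkOfDetNeZero]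
      field_simp
    simp only [unipotentChar_apply, hD, ← map_mul, ← map_inv]
    congr 1
    group

lemma mk_mem_range_unipotentChar_of_commute {P B : GL (Fin 2) F} {e : F}
    (h : Commute !![e, 1; 0, e] (P⁻¹ * B * P).val) :
    ProjGenLinGroup.mk B ∈ Set.range (unipotentChar P) := by
  obtain ⟨C, hC⟩ : ∃ C, P⁻¹ * B * P = C := ⟨_, rfl⟩
  rw [hC] at h
  have h₁₀ : C 1 0 = 0 := by
    simpa [mul_apply, Fin.sum_univ_two, mul_comm] using congr_fun₂ h 0 0
  have h₁₁ : C 1 1 = C 0 0 := by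
    have := congr_fun₂ h 0 1
    simp only [mul_apply, Fin.sum_univ_two, of_apply, cons_val', cons_val_zero, cons_val_one,
      cons_val_fin_one] at this
    linear_combination this
  have h₀₀ : C 0 0 ≠ 0 := fun h ↦ C.det.ne_zero (by simp [det_fin_two, h, h₁₀])
  refine ⟨C 0 1 / C 0 0, ?_⟩
  rw [unipotentChar_apply, ProjGenLinGroup.mk_eq_mk_iff]
  refine ⟨Units.mk0 _ h₀₀, ?_⟩
  have hCu : GeneralLinearGroup.upperRightHom (C 0 1 / C 0 0) *
      GeneralLinearGroup.scalar (Fin 2) (Units.mk0 _ h₀₀) = C := by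
    ext i j
    fin_cases i <;> fin_cases j <;> simp [h₁₀, h₁₁, h₀₀]
  rw [mul_assoc, ← GeneralLinearGroup.scalar_commute, ← mul_assoc, mul_assoc P, hCu, ← hC]
  group

variable [Finite F]

lemma exists_trace_eq_det_eq_of_discr_eq_zero {M : Matrix (Fin 2) (Fin 2) F} (hM : M.discr = 0) :
    ∃ e, M.trace = 2 * e ∧ M.det = e ^ 2 := by
  rw [discr_fin_two] at hM
  by_cases h2 : (2 : F) = 0
  · have : CharP F 2 := CharTwo.of_one_ne_zero_of_two_eq_zero one_ne_zero h2
    obtain ⟨e, he⟩ := FiniteField.isSquare_of_char_two (ringChar.eq F 2) M.det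
    refine ⟨e, ?_, he.trans (sq e).symm⟩
    have : M.trace ^ 2 = 0 := by linear_combination hM + 2 * M.det * h2
    rw [h2, zero_mul, eq_zero_of_pow_eq_zero this]
  · refine ⟨M.trace / 2, by field_simp, ?_⟩
    field_simp
    linear_combination -hM

lemma exists_forall_commute_mem_range_unipotentChar {A : GL (Fin 2) F} (hA : A.IsParabolic) :
    ∃ P, ∀ B, Commute A B → ProjGenLinGroup.mk B ∈ Set.range (unipotentChar P) := by
  obtain ⟨e, htr, hdet⟩ := exists_trace_eq_det_eq_of_discr_eq_zero hA.2
  obtain ⟨N, hN⟩ : ∃ N, (-e) • (1 : Matrix (Fin 2) (Fin 2) F) + (1 : F) • A.val = N := ⟨_, rfl⟩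
  have hN_sq : N ^ 2 = 0 := by
    have htrN : N.trace = 0 := by
      rw [← hN, trace_smul_one_add_smul]
      linear_combination htr
    have hdetN : N.det = 0 := by
      rw [← hN, det_smul_one_add_smul]
      linear_combination hdet - e * htr
    rw [sq_fin_two, htrN, hdetN, zero_smul, zero_smul, sub_zero]
  have hN₀ : N ≠ 0 := by
    rintro rfl
    exact one_ne_zero <|
      (smul_one_add_smul_mem_range_scalar_iff hA.1).1 ⟨0, (map_zero (scalar (Fin 2))).trans hN.symm⟩
  obtain ⟨P, hP⟩ := exists_mul_eq_mul_of_sq_eq_zero hN_sq hN₀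
  have hA' : (P⁻¹ * A * P).val = !![e, 1; 0, e] := by
    have hAP : A.val * P.val = P.val * !![e, 1; 0, e] := by
      have hA_eq : A.val = e • 1 + N := by rw [← hN]; module
      have hJ : !![e, 1; 0, e] = e • 1 + !![0, 1; 0, 0] := by
        ext i j
        fin_cases i <;> fin_cases j <;> simp
      rw [hA_eq, hJ, add_mul, mul_add, hP, smul_mul_assoc, mul_smul_comm, one_mul, mul_one]
    rw [mul_assoc, Units.val_mul, Units.val_mul, hAP, Units.inv_mul_cancel_left]
  refine ⟨P, fun B hB ↦ mk_mem_range_unipotentChar_of_commute (e := e) ?_⟩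
  rw [← hA']
  simpa using (hB.map (MulAut.conj P⁻¹)).map (Units.coeHom _)

end Parabolic

section Semisimple

open Matrix
open scoped MatrixGroups IsMulCommutative

lemma isCyclic_range_of_ker_le {H K Q : Type*} [Group H] [Group K] [Group Q] {χ : H →* K}
    {ψ : H →* Q} (h : χ.ker ≤ ψ.ker) [IsCyclic χ.range] : IsCyclic ψ.range := by
  obtain ⟨⟨-, g, rfl⟩, hg⟩ := IsCyclic.exists_generator (α := χ.range)
  refine ⟨⟨ψ g, g, rfl⟩, ?_⟩
  rintro ⟨-, x, rfl⟩
  obtain ⟨k, hk⟩ := mem_zpowers_iff.1 (hg ⟨χ x, x, rfl⟩)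
  have hker : g ^ (-k) * x ∈ χ.ker := by
    have : χ g ^ k = χ x := congrArg Subtype.val hk
    simp [MonoidHom.mem_ker, ← this]
  have : ψ g ^ k = ψ x := by
    have := h hker
    rwa [MonoidHom.mem_ker, map_mul, map_zpow, _root_.zpow_neg, inv_mul_eq_one] at this
  exact mem_zpowers_iff.2 ⟨k, Subtype.ext this⟩

variable {F : Type*} [Field F]

lemma mem_center_of_sq_eq_det {A B : GL (Fin 2) F} (hA : A.val.discr ≠ 0) (hAB : Commute A B)
    {R : Subalgebra F (Matrix (Fin 2) (Fin 2) F)} {K : Type*} [Field K] [Algebra F K]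
    (φ : R →ₐ[F] K) {r : R} (hr : r.val = B.val) (h : φ r ^ 2 = algebraMap F K B.val.det) :
    B ∈ center (GL (Fin 2) F) := by
  have hA₀ := notMem_center_of_discr_ne_zero hA
  have hcharpoly : φ r ^ 2 = algebraMap F K B.val.trace * φ r - algebraMap F K B.val.det := by
    have : r ^ 2 = B.val.trace • r - B.val.det • 1 := Subtype.ext (by simp [hr, sq_fin_two])
    rw [← map_pow, this, map_sub, map_smul, map_smul, map_one, Algebra.smul_def, Algebra.smul_def,
      mul_one]
  have hdiscr : B.val.discr = 0 := by
    have hdet : B.val.det ≠ 0 := B.det.ne_zero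
    refine (mul_eq_zero.1 ((algebraMap F K).injective ?_)).resolve_left hdet
    rw [discr_fin_two]
    simp only [map_mul, map_sub, map_pow, map_ofNat, map_zero]
    grind
  obtain ⟨a, b, hab⟩ := exists_val_eq_of_commute hA₀ hAB
  rw [mem_center_iff_of_val_eq hA₀ hab]
  rw [hab, discr_smul_one_add_smul] at hdiscr
  simpa [hA] using hdiscr

lemma isCyclic_map_mk_centralizer [Finite F] {A : GL (Fin 2) F} (hA : A.val.discr ≠ 0) :
    IsCyclic ((centralizer {A}).map ProjGenLinGroup.mk) := by
  obtain ⟨R, hR⟩ : ∃ R, Subalgebra.centralizer F {A.val} = R := ⟨_, rfl⟩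
  have mem_R {M} : M ∈ R ↔ Commute A.val M := by
    simp [← hR, Subalgebra.mem_centralizer_iff, commute_iff_eq]
  have : IsMulCommutative R := ⟨⟨fun M N ↦ Subtype.ext <| commute_trans_of_notMem_range_scalar
    (mt GeneralLinearGroup.mem_center_iff_val_mem_range_scalar.2 <|
      notMem_center_of_discr_ne_zero hA) (mem_R.1 M.2) (mem_R.1 N.2)⟩⟩
  obtain ⟨m, hm⟩ := Ideal.exists_maximal R
  let _ := Ideal.Quotient.field m
  have : Finite (R ⧸ m) := .of_surjective _ Ideal.Quotient.mk_surjective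
  -- Since `R` is commutative, the units of its residue field are cyclic, and only scalars lie in
  -- the kernel of `ψ ^ 2 / δ`, the ratio of the two eigenvalues.
  let ι : centralizer {A} →* R :=
    { toFun B := ⟨B.1.val, mem_R.2 (congrArg Units.val (mem_centralizer_singleton_iff.1 B.2).symm)⟩
      map_one' := rfl
      map_mul' _ _ := rfl }
  let ψ : centralizer {A} →* (R ⧸ m)ˣ := ((Ideal.Quotient.mk m).toMonoidHom.comp ι).toHomUnits
  let δ : centralizer {A} →* (R ⧸ m)ˣ :=
    (Units.map (algebraMap F (R ⧸ m)).toMonoidHom).comp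
      (GeneralLinearGroup.det.comp (centralizer {A}).subtype)
  have : IsCyclic (ψ ^ 2 / δ).range := inferInstance
  have : IsCyclic (ProjGenLinGroup.mk.comp (centralizer {A}).subtype).range := by
    refine isCyclic_range_of_ker_le (χ := ψ ^ 2 / δ) fun B hB ↦ ?_
    have hψδ : ψ B ^ 2 = δ B := div_eq_one.1 hB
    exact ProjGenLinGroup.mk_eq_one.2 <| mem_center_of_sq_eq_det hA
      (mem_centralizer_singleton_iff.1 B.2).symm (Ideal.Quotient.mkₐ F m) (r := ι B) rfl
      (congrArg Units.val hψδ)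
  rwa [MonoidHom.range_comp, range_subtype] at this

end Semisimple

section TraceZero

open Matrix Polynomial
open scoped MatrixGroups

variable {F : Type*} [Field F] {A : GL (Fin 2) F}

lemma eq_zero_or_eq_zero_of_sq_add_sq_eq_sq (hF : Nat.card F = 5) {a b c : F} (hc : c ≠ 0)
    (h : a ^ 2 + b ^ 2 = c ^ 2) : a = 0 ∨ b = 0 := by
  have : Fact (Nat.Prime 5) := ⟨Nat.prime_five⟩
  have := Nat.finite_of_card_ne_zero (hF.trans_ne (by decide))
  have := Fintype.ofFinite F
  have h5 : (5 : F) = 0 := by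
    rw [← FiniteField.cast_card_eq_zero F, ← Nat.card_eq_fintype_card, hF]
    norm_num
  have pow_four {x : F} (hx : x ≠ 0) : x ^ 4 = 1 := by
    rw [← FiniteField.pow_card_sub_one_eq_one x hx, ← Nat.card_eq_fintype_card, hF]
  by_contra! hab
  have ha := pow_four hab.1
  have hb := pow_four hab.2
  have hc := pow_four hc
  grind

lemma exists_commute_val_eq (hA : A ∉ center (GL (Fin 2) F)) {a b : F} (hb : b ≠ 0)
    (h : (a • (1 : Matrix (Fin 2) (Fin 2) F) + b • A.val).det ≠ 0) :
    ∃ B : GL (Fin 2) F, Commute A B ∧ B ∉ center (GL (Fin 2) F) ∧ B.val = a • 1 + b • A.val := by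
  have hB : (GeneralLinearGroup.mkOfDetNeZero _ h).val = a • 1 + b • A.val := rfl
  exact ⟨_, commute_of_val_eq hB, mt (mem_center_iff_of_val_eq hA hB).1 hb, hB⟩

lemma exists_commute_trace_ne_zero [Finite F] (hF : 3 < Nat.card F) (h2 : (2 : F) ≠ 0)
    (hA : A ∉ center (GL (Fin 2) F)) (htr : A.val.trace = 0) :
    ∃ B : GL (Fin 2) F, Commute A B ∧ B ∉ center (GL (Fin 2) F) ∧ B.val.trace ≠ 0 := by
  obtain ⟨α, hα⟩ : ∃ α, (X * (X ^ 2 + C A.val.det)).eval α ≠ 0 := by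
    refine exists_eval_ne_zero_of_natDegree_lt ?_ (lt_of_le_of_lt (by compute_degree) hF)
    exact Monic.ne_zero (by monicity!)
  simp only [eval_mul, eval_add, eval_pow, eval_X, eval_C, mul_ne_zero_iff] at hα
  obtain ⟨B, hAB, hB, hBα⟩ := exists_commute_val_eq hA (a := α) one_ne_zero <| by
    rw [det_smul_one_add_smul, htr]
    simpa using hα.2
  refine ⟨B, hAB, hB, ?_⟩
  simpa [hBα, trace_smul_one_add_smul, htr, h2] using hα.1

lemma exists_commute_trace_ne_zero_isSquare_det [Finite F] (hF : 5 < Nat.card F)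
    (h2 : (2 : F) ≠ 0) (hA : A ∉ center (GL (Fin 2) F)) (htr : A.val.trace = 0) :
    ∃ B : GL (Fin 2) F, Commute A B ∧ B ∉ center (GL (Fin 2) F) ∧ B.val.trace ≠ 0 ∧
      IsSquare B.val.det := by
  obtain ⟨α, hα⟩ : ∃ α, (X * ((X ^ 2 - C A.val.det) * (X ^ 2 + C A.val.det))).eval α ≠ 0 := by
    refine exists_eval_ne_zero_of_natDegree_lt ?_ (lt_of_le_of_lt (by compute_degree) hF)
    exact Monic.ne_zero (by monicity!)
  simp only [eval_mul, eval_add, eval_sub, eval_pow, eval_X, eval_C, mul_ne_zero_iff] at hα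
  -- The coefficients are those of `(α + A) ^ 2`, whose determinant is a square.
  have hdet : ((α ^ 2 - A.val.det) • (1 : Matrix (Fin 2) (Fin 2) F) + (2 * α) • A.val).det =
      (α ^ 2 + A.val.det) ^ 2 := by
    rw [det_smul_one_add_smul, htr]
    ring
  obtain ⟨B, hAB, hB, hBα⟩ := exists_commute_val_eq hA (mul_ne_zero h2 hα.1)
    (hdet.trans_ne (pow_ne_zero 2 hα.2.2))
  refine ⟨B, hAB, hB, ?_, hBα ▸ hdet ▸ IsSquare.sq _⟩
  simpa [hBα, trace_smul_one_add_smul, htr, h2] using hα.2.1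

end TraceZero

section Torus

open Matrix
open scoped MatrixGroups

variable {G F : Type*} [Group G] [Field F] {f : G →* PGL(2, F)} {x z w : G} {A B C : GL (Fin 2) F}

/-- The preimage in `G` of the image in `PGL(2, F)` of the centralizer of `A` in `GL(2, F)`; for
`A` of nonzero discriminant this is the preimage of a maximal torus. -/
def torus (f : G →* PGL(2, F)) (A : GL (Fin 2) F) : Subgroup G :=
  ((centralizer {A}).map ProjGenLinGroup.mk).comap f

lemma mem_torus_iff (hB : f x = ProjGenLinGroup.mk B) : x ∈ torus f A ↔ Commute A B := by
  rw [torus, mem_comap, mem_map]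
  constructor
  · rintro ⟨C, hC, hCB⟩
    exact commute_of_mk_eq_mk (hCB.trans hB) (mem_centralizer_singleton_iff.1 hC).symm
  · exact fun h ↦ ⟨B, mem_centralizer_singleton_iff.2 h.symm, hB.symm⟩

lemma torus_eq_of_commute (hA : A ∉ center (GL (Fin 2) F)) (hB : B ∉ center (GL (Fin 2) F))
    (h : Commute A B) : torus f A = torus f B := by
  ext x
  obtain ⟨C, hC⟩ := ProjGenLinGroup.mk_surjective (f x)
  rw [mem_torus_iff hC.symm, mem_torus_iff hC.symm]
  exact ⟨commute_trans_of_notMem_center hA h, commute_trans_of_notMem_center hB h.symm⟩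

lemma mem_center_iff_of_map_eq_mk (hker : f.ker = center G) (hA : f x = ProjGenLinGroup.mk A) :
    x ∈ center G ↔ A ∈ center (GL (Fin 2) F) := by
  rw [← hker, MonoidHom.mem_ker, hA, ProjGenLinGroup.mk_eq_one]

lemma commute_of_map_eq_mk (hA : f x = ProjGenLinGroup.mk A) (hB : f z = ProjGenLinGroup.mk B)
    (h : Commute x z) : Commute (ProjGenLinGroup.mk A) (ProjGenLinGroup.mk B) :=
  hA ▸ hB ▸ h.map f

lemma mem_torus_or_of_commute (hA : f x = ProjGenLinGroup.mk A) (hB : f z = ProjGenLinGroup.mk B)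
    (h : Commute x z) :
    z ∈ torus f A ∨ (2 : F) ≠ 0 ∧ A.val.trace = 0 ∧ B.val.trace = 0 := by
  rw [mem_torus_iff hB, or_iff_not_imp_left]
  intro hAB
  have hneg := (commute_or_mul_eq_neg_mul_of_commute_mk (commute_of_map_eq_mk hA hB h)).resolve_left
    hAB
  have h2 := two_ne_zero_of_mul_eq_neg_mul hneg hAB
  exact ⟨h2, trace_eq_zero_of_mul_eq_neg_mul h2 hneg,
    trace_eq_zero_of_mul_eq_neg_mul h2 (neg_eq_iff_eq_neg.2 hneg).symm⟩

lemma centralizer_le_torus (hA : f x = ProjGenLinGroup.mk A)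
    (h : A.val.trace ≠ 0 ∨ (2 : F) = 0) : centralizer {x} ≤ torus f A := by
  intro z hz
  obtain ⟨B, hB⟩ := ProjGenLinGroup.mk_surjective (f z)
  refine (mem_torus_or_of_commute hA hB.symm
    (mem_centralizer_singleton_iff.1 hz).symm).resolve_right ?_
  rintro ⟨h2, htr, -⟩
  exact h.elim (· htr) h2

lemma commute_of_mem_torus [Finite F] (hker : f.ker = center G) (hA : A.val.discr ≠ 0)
    (hx : x ∈ torus f A) (hz : z ∈ torus f A) : Commute x z := by
  have := isCyclic_map_mk_centralizer hA
  have := (f.subgroupComap ((centralizer {A}).map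
    ProjGenLinGroup.mk)).isMulCommutative_of_isCyclic_of_ker_le_center fun t ht ↦ by
      have ht : t.1 ∈ center G := hker ▸ congrArg Subtype.val ht
      exact mem_center_iff.2 fun s ↦ Subtype.ext (mem_center_iff.1 ht s)
  exact congrArg Subtype.val (this.is_comm.comm ⟨x, hx⟩ ⟨z, hz⟩)

lemma centralizer_eq_torus [Finite F] (hker : f.ker = center G) (hx : IsMinCentralizer x)
    (hA : f x = ProjGenLinGroup.mk A) (hA₀ : A.val.discr ≠ 0) (hw : w ∉ center G)
    (hB : f w = ProjGenLinGroup.mk B) (hAB : Commute A B)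
    (hB₀ : B.val.trace ≠ 0 ∨ (2 : F) = 0) : centralizer {x} = torus f A := by
  have le_centralizer : torus f A ≤ centralizer {x} := fun z hz ↦
    mem_centralizer_singleton_iff.2 <|
      commute_of_mem_torus hker hA₀ hz ((mem_torus_iff hA).2 (Commute.refl A))
  have centralizer_le : centralizer {w} ≤ torus f A := by
    rw [torus_eq_of_commute (notMem_center_of_discr_ne_zero hA₀)
      (mt (mem_center_iff_of_map_eq_mk hker hB).2 hw) hAB]
    exact centralizer_le_torus hB hB₀
  exact le_antisymm (hx w hw (centralizer_le.trans le_centralizer) ▸ centralizer_le) le_centralizer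

end Torus

section Rigid

open Matrix
open scoped MatrixGroups

/-- `x` is rigid if every non-central element commuting with `x` has the same centralizer as
`x`. -/
def IsRigid {G : Type*} [Group G] (x : G) : Prop :=
  ∀ z ∉ center G, Commute x z → centralizer {z} = centralizer {x}

variable {G F : Type*} [Group G] [Field F] [Finite F] {f : G →* PGL(2, F)} {x z : G}
  {A B : GL (Fin 2) F}

theorem commute_trans_of_isParabolic (hker : f.ker = center G)
    (hrange : (ProjectiveSpecialLinearGroup.toPGL : PSL(2, F) →* _).range ≤ f.range)
    (hA : A.IsParabolic) {w : G} (hx : x ∈ torus f A) (hz : z ∈ torus f A)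
    (hw : w ∈ torus f A) (hz₁ : z ∉ center G) (hxz : Commute x z) (hzw : Commute z w) :
    Commute x w := by
  obtain ⟨P, hP⟩ := exists_forall_commute_mem_range_unipotentChar hA
  have mem_range {y} (hy : y ∈ torus f A) : f y ∈ Set.range (unipotentChar P) := by
    obtain ⟨C, hC⟩ := ProjGenLinGroup.mk_surjective (f y)
    exact hC ▸ hP C ((mem_torus_iff hC.symm).1 hy)
  exact commute_trans_of_sq_equivariant hker.le
    (fun a ↦ hrange (unipotentChar_mem_range_toPGL P a))
    (fun s hs ↦ (exists_unipotentChar_sq_mul_eq_conj P hs).imp fun t ht ↦ ⟨hrange ht.1, ht.2⟩)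
    (mem_range hx) (mem_range hz) (mem_range hw) hz₁ hxz hzw

lemma centralizer_le_of_isParabolic (hker : f.ker = center G)
    (hrange : (ProjectiveSpecialLinearGroup.toPGL : PSL(2, F) →* _).range ≤ f.range)
    (hA : f x = ProjGenLinGroup.mk A) (hA₀ : A.IsParabolic) (hB : f z = ProjGenLinGroup.mk B)
    (hB₀ : B.IsParabolic) (hxz : Commute x z) : centralizer {z} ≤ centralizer {x} := by
  have hz : z ∉ center G :=
    mt (mem_center_iff_of_map_eq_mk hker hB).1 (notMem_center_of_isParabolic hB₀)
  have hzT : z ∈ torus f A := centralizer_le_torus hA (trace_ne_zero_or_of_isParabolic hA₀)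
    (mem_centralizer_singleton_iff.2 hxz.symm)
  intro w hw
  have hwT : w ∈ torus f A := by
    rw [torus_eq_of_commute (notMem_center_of_isParabolic hA₀) (notMem_center_of_isParabolic hB₀)
      ((mem_torus_iff hB).1 hzT)]
    exact centralizer_le_torus hB (trace_ne_zero_or_of_isParabolic hB₀) hw
  exact mem_centralizer_singleton_iff.2 <| .symm <| commute_trans_of_isParabolic hker hrange hA₀
    ((mem_torus_iff hA).2 (Commute.refl A)) hzT hwT hz hxz (mem_centralizer_singleton_iff.1 hw).symm

theorem isRigid_of_isParabolic (hker : f.ker = center G)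
    (hrange : (ProjectiveSpecialLinearGroup.toPGL : PSL(2, F) →* _).range ≤ f.range)
    (hA : f x = ProjGenLinGroup.mk A) (hA₀ : A.IsParabolic) : IsRigid x := by
  intro z hz hxz
  obtain ⟨B, hB⟩ := ProjGenLinGroup.mk_surjective (f z)
  have hAB : Commute A B := (mem_torus_iff hB.symm).1 <|
    centralizer_le_torus hA (trace_ne_zero_or_of_isParabolic hA₀)
      (mem_centralizer_singleton_iff.2 hxz.symm)
  have hB₀ : B.IsParabolic :=
    isParabolic_of_commute hA₀ (mt (mem_center_iff_of_map_eq_mk hker hB.symm).2 hz) hAB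
  exact le_antisymm (centralizer_le_of_isParabolic hker hrange hA hA₀ hB.symm hB₀ hxz)
    (centralizer_le_of_isParabolic hker hrange hB.symm hB₀ hA hA₀ hxz.symm)

end Rigid

section CardEqFive

open Matrix
open scoped MatrixGroups

variable {G F : Type*} [Group G] [Field F] {f : G →* PGL(2, F)} {x y z : G} {A : GL (Fin 2) F}

lemma map_eq_of_mem_torus_of_card_eq_five (hF : Nat.card F = 5) (hker : f.ker = center G)
    (hrange : f.range ≤ (ProjectiveSpecialLinearGroup.toPGL : PSL(2, F) →* _).range)
    (hx : x ∉ center G) (hA : f x = ProjGenLinGroup.mk A) (htr : A.val.trace = 0)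
    (hz : z ∈ torus f A) (hz₀ : z ∉ center G) : f z = f x := by
  obtain ⟨B, hB⟩ := ProjGenLinGroup.mk_surjective (f z)
  have hA₀ := mt (mem_center_iff_of_map_eq_mk hker hA).2 hx
  have hB₀ := mt (mem_center_iff_of_map_eq_mk hker hB.symm).2 hz₀
  obtain ⟨a, b, hab⟩ := exists_val_eq_of_commute hA₀ ((mem_torus_iff hB.symm).1 hz)
  have hb : b ≠ 0 := mt (mem_center_iff_of_val_eq hA₀ hab).2 hB₀
  have isSquare_det {w} {C : GL (Fin 2) F} (hC : f w = ProjGenLinGroup.mk C) :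
      ∃ c ≠ 0, C.val.det = c ^ 2 := by
    obtain ⟨c, hc⟩ := mk_mem_range_toPGL_iff.1 (hC ▸ hrange ⟨w, rfl⟩)
    refine ⟨c, ?_, hc.trans (sq c).symm⟩
    rintro rfl
    exact C.det.ne_zero (hc.trans (zero_mul 0))
  obtain ⟨d, hd, hdA⟩ := isSquare_det hA
  obtain ⟨c, hc, hcB⟩ := isSquare_det hB.symm
  have ha : a = 0 := by
    refine (eq_zero_or_eq_zero_of_sq_add_sq_eq_sq hF hc (b := b * d) ?_).resolve_right
      (mul_ne_zero hb hd)
    rw [← hcB, hab, det_smul_one_add_smul, htr, hdA]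
    ring
  rw [← hB, hA, eq_comm, ProjGenLinGroup.mk_eq_mk_iff]
  refine ⟨Units.mk0 b hb, Units.ext ?_⟩
  rw [hab, ha, Units.val_mul, GeneralLinearGroup.coe_scalar, Units.val_mk0, zero_smul, zero_add,
    ← scalar_comm _ (Commute.all b), scalar_apply, ← smul_eq_diagonal_mul]

lemma commute_inv_mul_of_mul_eq_neg_mul {B C : GL (Fin 2) F} (hB : A * B = -(B * A))
    (hC : A * C = -(C * A)) : Commute A (B⁻¹ * C) := by
  have hB' : B * A = -(A * B) := (neg_eq_iff_eq_neg.2 hB).symm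
  refine mul_left_cancel (a := B) ?_
  rw [← mul_assoc, hB', neg_mul, mul_assoc, mul_inv_cancel_left, hC, neg_neg, ← mul_assoc,
    mul_inv_cancel_left]

lemma commute_of_commute_of_card_eq_five (hF : Nat.card F = 5) (hker : f.ker = center G)
    (hrange : f.range ≤ (ProjectiveSpecialLinearGroup.toPGL : PSL(2, F) →* _).range)
    (hx : x ∉ center G) (hA : f x = ProjGenLinGroup.mk A) (htr : A.val.trace = 0)
    (hxy : Commute x y) (hxz : Commute x z) : Commute y z := by
  have commute_torus {t w : G} (ht : t ∈ torus f A) (hxw : Commute x w) : Commute t w := by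
    by_cases ht₀ : t ∈ center G
    · exact (mem_center_iff.1 ht₀ w).symm
    · exact (commute_iff_of_map_eq hker.le
        (map_eq_of_mem_torus_of_card_eq_five hF hker hrange hx hA htr ht ht₀) rfl).2 hxw
  by_cases hy : y ∈ torus f A
  · exact commute_torus hy hxz
  by_cases hz : z ∈ torus f A
  · exact (commute_torus hz hxy).symm
  have hyz : y⁻¹ * z ∈ torus f A := by
    obtain ⟨B, hB⟩ := ProjGenLinGroup.mk_surjective (f y)
    obtain ⟨C, hC⟩ := ProjGenLinGroup.mk_surjective (f z)
    rw [mem_torus_iff hB.symm] at hy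
    rw [mem_torus_iff hC.symm] at hz
    rw [mem_torus_iff (B := B⁻¹ * C) (by rw [map_mul, map_inv, map_mul, map_inv, hB, hC])]
    exact commute_inv_mul_of_mul_eq_neg_mul
      ((commute_or_mul_eq_neg_mul_of_commute_mk (commute_of_map_eq_mk hA hB.symm hxy)).resolve_left
        hy)
      ((commute_or_mul_eq_neg_mul_of_commute_mk (commute_of_map_eq_mk hA hC.symm hxz)).resolve_left
        hz)
  simpa using (Commute.refl y).mul_right (commute_torus hyz hxy).symm

theorem isRigid_of_card_eq_five (hF : Nat.card F = 5) (hker : f.ker = center G)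
    (hrange : f.range ≤ (ProjectiveSpecialLinearGroup.toPGL : PSL(2, F) →* _).range)
    (hx : x ∉ center G) (hA : f x = ProjGenLinGroup.mk A) (htr : A.val.trace = 0) : IsRigid x := by
  intro z hz hxz
  obtain ⟨B, hB, htrB⟩ : ∃ B, f z = ProjGenLinGroup.mk B ∧ B.val.trace = 0 := by
    obtain ⟨B, hB⟩ := ProjGenLinGroup.mk_surjective (f z)
    rcases mem_torus_or_of_commute hA hB.symm hxz with hzT | ⟨-, -, htrB⟩
    · refine ⟨A, ?_, htr⟩
      exact (map_eq_of_mem_torus_of_card_eq_five hF hker hrange hx hA htr hzT hz).trans hA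
    · exact ⟨B, hB.symm, htrB⟩
  ext w
  rw [mem_centralizer_singleton_iff, mem_centralizer_singleton_iff]
  exact ⟨fun h ↦ commute_of_commute_of_card_eq_five hF hker hrange hz hB htrB (Commute.symm h)
      hxz.symm,
    fun h ↦ commute_of_commute_of_card_eq_five hF hker hrange hx hA htr (Commute.symm h) hxz⟩

end CardEqFive

section MinimalCentralizers

open Matrix
open scoped MatrixGroups

variable {G F : Type*} [Group G] [Field F] {f : G →* PGL(2, F)} {x y z : G} {A : GL (Fin 2) F}

lemma IsRigid.centralizer_eq (hx : IsRigid x) (hy : y ∉ center G) (hz : z ∉ center G)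
    (hxz : Commute x z) (hyz : Commute y z) : centralizer {x} = centralizer {y} := by
  have hyx : y ∈ centralizer {x} := hx z hz hxz ▸ mem_centralizer_singleton_iff.2 hyz
  exact (hx y hy (mem_centralizer_singleton_iff.1 hyx).symm).symm

variable [Finite F]

lemma odd_card_of_two_ne_zero (h2 : (2 : F) ≠ 0) : Odd (Nat.card F) := by
  have := Fintype.ofFinite F
  rw [Nat.card_eq_fintype_card, Nat.odd_iff]
  refine FiniteField.odd_card_of_char_ne_two fun h ↦ h2 ?_
  have := ringChar.of_eq h
  exact CharTwo.two_eq_zero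

theorem isRigid_or_centralizer_eq_torus (hF : Nat.card F ≠ 3) (hker : f.ker = center G)
    (hrange : f.range = ⊤ ∨
      f.range = (ProjectiveSpecialLinearGroup.toPGL : PSL(2, F) →* _).range)
    (hx : x ∉ center G) (hmin : IsMinCentralizer x) (hA : f x = ProjGenLinGroup.mk A) :
    IsRigid x ∨ centralizer {x} = torus f A := by
  have hA₀ := mt (mem_center_iff_of_map_eq_mk hker hA).2 hx
  by_cases hdiscr : A.val.discr = 0
  · refine .inl (isRigid_of_isParabolic hker (hrange.elim (· ▸ le_top) Eq.ge) hA ⟨?_, hdiscr⟩)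
    rwa [← GeneralLinearGroup.mem_center_iff_val_mem_range_scalar]
  by_cases htr : A.val.trace ≠ 0 ∨ (2 : F) = 0
  · exact .inr (centralizer_eq_torus hker hmin hA hdiscr hx hA (.refl A) htr)
  obtain ⟨htr, h2⟩ : A.val.trace = 0 ∧ (2 : F) ≠ 0 := by simpa using htr
  have centralizer_eq {B : GL (Fin 2) F} (hAB : Commute A B) (hB₀ : B ∉ center (GL (Fin 2) F))
      (htrB : B.val.trace ≠ 0) (hB : ProjGenLinGroup.mk B ∈ f.range) :
      centralizer {x} = torus f A := by
    obtain ⟨w, hw⟩ := hB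
    exact centralizer_eq_torus hker hmin hA hdiscr (mt (mem_center_iff_of_map_eq_mk hker hw).1 hB₀)
      hw hAB (.inl htrB)
  have hodd := odd_card_of_two_ne_zero h2
  have hcard := Finite.one_lt_card (α := F)
  rcases hrange with hrange | hrange
  · obtain ⟨B, hAB, hB₀, htrB⟩ := exists_commute_trace_ne_zero (by grind) h2 hA₀ htr
    exact .inr (centralizer_eq hAB hB₀ htrB (hrange ▸ mem_top _))
  by_cases hF₅ : Nat.card F = 5
  · exact .inl (isRigid_of_card_eq_five hF₅ hker hrange.le hx hA htr)
  · obtain ⟨B, hAB, hB₀, htrB, hdet⟩ :=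
      exists_commute_trace_ne_zero_isSquare_det (by grind) h2 hA₀ htr
    exact .inr (centralizer_eq hAB hB₀ htrB (hrange ▸ mk_mem_range_toPGL_iff.2 hdet))

theorem isCAminGroup_of_ker_eq_center (hF : Nat.card F ≠ 3) (hker : f.ker = center G)
    (hrange : f.range = ⊤ ∨
      f.range = (ProjectiveSpecialLinearGroup.toPGL : PSL(2, F) →* _).range) :
    IsCAminGroup G := by
  intro x y hx hy hx_min hy_min hxy
  refine le_antisymm (fun z ⟨hxz, hyz⟩ ↦ by_contra fun hz ↦ hxy ?_)
    (le_inf (center_le_centralizer _) (center_le_centralizer _))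
  have hxz' : Commute x z := (mem_centralizer_singleton_iff.1 hxz).symm
  have hyz' : Commute y z := (mem_centralizer_singleton_iff.1 hyz).symm
  obtain ⟨A, hA⟩ := ProjGenLinGroup.mk_surjective (f x)
  obtain ⟨B, hB⟩ := ProjGenLinGroup.mk_surjective (f y)
  obtain ⟨C, hC⟩ := ProjGenLinGroup.mk_surjective (f z)
  have notMem {w : G} {D : GL (Fin 2) F} (hD : ProjGenLinGroup.mk D = f w) :=
    mt (mem_center_iff_of_map_eq_mk hker hD.symm).2
  rcases isRigid_or_centralizer_eq_torus hF hker hrange hx hx_min hA.symm with hx' | hx'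
  · exact hx'.centralizer_eq hy hz hxz' hyz'
  rcases isRigid_or_centralizer_eq_torus hF hker hrange hy hy_min hB.symm with hy' | hy'
  · exact (hy'.centralizer_eq hx hz hyz' hxz').symm
  rw [hx'] at hxz ⊢
  rw [hy'] at hyz ⊢
  exact (torus_eq_of_commute (notMem hA hx) (notMem hC hz) ((mem_torus_iff hC.symm).1 hxz)).trans
    (torus_eq_of_commute (notMem hB hy) (notMem hC hz) ((mem_torus_iff hC.symm).1 hyz)).symm

theorem isCAminGroup_of_injective {ι : G ⧸ center G →* PGL(2, F)} (hF : Nat.card F ≠ 3)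
    (hι : Function.Injective ι)
    (hrange : ι.range = ⊤ ∨
      ι.range = (ProjectiveSpecialLinearGroup.toPGL : PSL(2, F) →* _).range) :
    IsCAminGroup G := by
  refine isCAminGroup_of_ker_eq_center (f := ι.comp (QuotientGroup.mk' _)) hF ?_ ?_
  · rw [MonoidHom.ker_comp_of_injective _ _ hι, QuotientGroup.ker_mk']
  · rwa [MonoidHom.range_comp, QuotientGroup.range_mk', ← MonoidHom.range_eq_map]

end MinimalCentralizers

theorem psl_pgl_isCAmin_general (G : Type*) [Group G] (F : Type*) [Field F] [Finite F]
    (hF : Nat.card F ≠ 3)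
    (h : Nonempty ((G ⧸ center G) ≃* PSL2 F) ∨ Nonempty ((G ⧸ center G) ≃* PGL2 F)) :
    IsCAminGroup G := by
  rcases h with ⟨⟨e⟩⟩ | ⟨⟨e⟩⟩
  · let ι : PSL2 F →* Matrix.ProjGenLinGroup (Fin 2) F := Matrix.ProjectiveSpecialLinearGroup.toPGL
    have hι : Function.Injective ι := Matrix.ProjectiveSpecialLinearGroup.toPGL_injective
    refine isCAminGroup_of_injective (ι := ι.comp e.toMonoidHom) hF (hι.comp e.injective) (.inr ?_)
    rw [MonoidHom.range_comp, MonoidHom.range_eq_top.2 e.surjective, ← MonoidHom.range_eq_map]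
  · let e' : G ⧸ center G ≃* Matrix.ProjGenLinGroup (Fin 2) F := e
    exact isCAminGroup_of_injective (ι := e'.toMonoidHom) hF e'.injective
      (.inl (MonoidHom.range_eq_top.2 e'.surjective))

theorem psl_pgl_isCAmin (G : Type*) [Group G] [Finite G] (p n : ℕ)
    (hp : p.Prime) (hn : 1 ≤ n) (hpn : 3 < p ^ n)
    (F : Type*) [Field F] [Fintype F] (hF : Nat.card F = p ^ n)
    (h : Nonempty ((G ⧸ center G) ≃* PSL2 F) ∨
         Nonempty ((G ⧸ center G) ≃* PGL2 F)) :
    IsCAminGroup G :=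
  psl_pgl_isCAmin_general G F (hF ▸ hpn.ne') h
end
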